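/- For every complex matrix ρ indexed by F_2^3 (an arbitrary three-qubit operator), the twirling identity (1/8) Σ_{d∈F_2^3} S^{(d)} · ρ · S^{(d)} = Σ_{b∈F_2^3} ⟨M_b, ρ M_b⟩ |M_b⟩⟨M_b| holds, where ⟨·,·⟩ is the standard Hermitian inner product on ℂ^{F_2^3} and |M_b⟩⟨M_b| denotes the outer product. Consequently, if ρ is positive semidefinite with trace 1 and ⟨CCZ, ρ CCZ⟩ ≥ 1 − p, then the coefficients p_b := ⟨M_b, ρ M_b⟩ are nonnegative real, sum to 1, and satisfy Σ_{b ≠ 0} p_b ≤ p. -/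

import Mathlib

noncomputable section

/-- `(−1)^x` for `x ∈ F_2`. -/
def sgn2 (x : ZMod 2) : ℂ := if x = 0 then 1 else -1

/-- The `CCZ` gate: diagonal with entry `(−1)^{b₁b₂b₃}` at `b ∈ F_2^3`. -/
def CCZm : Matrix (Fin 3 → ZMod 2) (Fin 3 → ZMod 2) ℂ :=
  Matrix.diagonal fun b => sgn2 (b 0 * b 1 * b 2)

/-- The three-qubit Pauli `X^d`: `(X^d)_{b,b'} = 1` if `b = b' + d`, else `0`. -/
def Xm3 (d : Fin 3 → ZMod 2) : Matrix (Fin 3 → ZMod 2) (Fin 3 → ZMod 2) ℂ :=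
  Matrix.of fun b b' => if b = b' + d then 1 else 0

/-- The three-qubit Pauli `Z^d`: diagonal with entry `(−1)^{Σ_i d_i b_i}` at `b`. -/
def Zm3 (d : Fin 3 → ZMod 2) : Matrix (Fin 3 → ZMod 2) (Fin 3 → ZMod 2) ℂ :=
  Matrix.diagonal fun b => sgn2 (∑ i, d i * b i)

/-- The stabilisers `S^{(d)} = CCZ · X^d · CCZ` of the `CCZ` magic state. -/
def Sm (d : Fin 3 → ZMod 2) : Matrix (Fin 3 → ZMod 2) (Fin 3 → ZMod 2) ℂ :=
  CCZm * Xm3 d * CCZm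

/-- The `CCZ` magic state `|CCZ⟩`, with entry `8^{-1/2} (−1)^{b₁b₂b₃}` at `b`. -/
def cczVec : (Fin 3 → ZMod 2) → ℂ :=
  fun b => ((Real.sqrt 8 : ℝ) : ℂ)⁻¹ * sgn2 (b 0 * b 1 * b 2)

/-- `|M_b⟩ := Z^b |CCZ⟩`, an orthonormal basis of the three-qubit space. -/
def Mvec (b : Fin 3 → ZMod 2) : (Fin 3 → ZMod 2) → ℂ :=
  (Zm3 b).mulVec cczVec

/-- The standard Hermitian inner product `⟨u, v⟩ = Σ_x conj (u x) * v x`. -/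
def innerC (u v : (Fin 3 → ZMod 2) → ℂ) : ℂ :=
  ∑ x, (starRingEnd ℂ) (u x) * v x

/-- The outer product `|M_b⟩⟨M_b|`. -/
def outerM (b : Fin 3 → ZMod 2) : Matrix (Fin 3 → ZMod 2) (Fin 3 → ZMod 2) ℂ :=
  Matrix.of fun x y => Mvec b x * (starRingEnd ℂ) (Mvec b y)

/-!
Each stabiliser is diagonal in the basis `M_b`, with character eigenvalues:
`S^{(d)} = ∑ b, (-1)^{b·d} |M_b⟩⟨M_b|`. Expanding both factors of `S^{(d)} ρ S^{(d)}` and averaging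
over `d`, the orthogonality of characters kills every cross term `|M_b⟩⟨M_b| ρ |M_c⟩⟨M_c|` with
`b ≠ c`. The case `d = 0` says that the `|M_b⟩⟨M_b|` sum to the identity, so `∑ b, p_b = tr ρ`.
-/

open Matrix

theorem sum_addChar_dotProduct {R R' ι : Type*} [CommRing R] [Fintype R] [DecidableEq R]
    [CommRing R'] [IsDomain R'] [Fintype ι] [DecidableEq ι] {ψ : AddChar R R'}
    (hψ : ψ.IsPrimitive) (z : ι → R) :
    ∑ b : ι → R, ψ (b ⬝ᵥ z) = if z = 0 then (Fintype.card R : R') ^ Fintype.card ι else 0 := by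
  split_ifs with hz
  · simp [hz]
  · obtain ⟨i, hi⟩ := Function.ne_iff.mp hz
    obtain ⟨a, ha⟩ := AddChar.ne_one_iff.mp (hψ hi)
    let χ : AddChar (ι → R) R' :=
      ψ.compAddMonoidHom (AddMonoidHom.mk' (· ⬝ᵥ z) fun b c => add_dotProduct b c z)
    have hχ : χ ≠ 1 := AddChar.ne_one_iff.mpr
      ⟨Pi.single i a, by simpa [χ, AddChar.mulShift_apply, mul_comm] using ha⟩
    exact AddChar.sum_eq_zero_of_ne_one hχ

theorem sum_mul_mul_eq_smul_sum_of_orthogonal {ι κ K A : Type*} [Fintype ι] [Fintype κ]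
    [DecidableEq κ] [CommSemiring K] [Semiring A] [Algebra K A]
    {S : ι → A} {P : κ → A} {χ : κ → ι → K} {N : K} (hS : ∀ d, S d = ∑ b, χ b d • P b)
    (hχ : ∀ b c, ∑ d, χ b d * χ c d = if b = c then N else 0) (ρ : A) :
    ∑ d, S d * ρ * S d = N • ∑ b, P b * ρ * P b := by
  calc ∑ d, S d * ρ * S d
      = ∑ d, ∑ b, ∑ c, (χ b d * χ c d) • (P b * ρ * P c) := by
        refine Finset.sum_congr rfl fun d _ => ?_
        rw [hS, Finset.sum_mul, Finset.sum_mul_sum]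
        simp only [smul_mul_assoc, mul_smul_comm, smul_smul, mul_comm]
    _ = ∑ b, ∑ c, (∑ d, χ b d * χ c d) • (P b * ρ * P c) := by
        simp only [Finset.sum_smul]
        rw [Finset.sum_comm]
        exact Finset.sum_congr rfl fun b _ => Finset.sum_comm
    _ = N • ∑ b, P b * ρ * P b := by
        simp only [hχ, ite_smul, zero_smul, Finset.sum_ite_eq, Finset.mem_univ, if_true,
          Finset.smul_sum]

section RankOne

variable {l m n o κ K : Type*} [Fintype m] [Fintype n] [CommSemiring K]

theorem vecMulVec_mul_mul_vecMulVec (u : l → K) (v : n → K) (ρ : Matrix n m K) (w : m → K)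
    (z : o → K) :
    vecMulVec u v * ρ * vecMulVec w z = (v ⬝ᵥ ρ *ᵥ w) • vecMulVec u z := by
  rw [Matrix.mul_assoc, mul_vecMulVec, vecMulVec_mul_vecMulVec, vecMulVec_smul]

theorem sum_dotProduct_mulVec_eq_trace [DecidableEq n] [Fintype κ] {v w : κ → n → K}
    (h : ∑ b, vecMulVec (v b) (w b) = 1) (ρ : Matrix n n K) :
    ∑ b, w b ⬝ᵥ ρ *ᵥ v b = ρ.trace := by
  calc ∑ b, w b ⬝ᵥ ρ *ᵥ v b
      = ∑ b, (ρ * vecMulVec (v b) (w b)).trace := by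
        simp only [mul_vecMulVec, trace_vecMulVec, dotProduct_comm]
    _ = ρ.trace := by rw [← trace_sum, ← Finset.mul_sum, h, Matrix.mul_one]

end RankOne

theorem sum_ne_le_of_sum_sub_le {ι M : Type*} [Fintype ι] [DecidableEq ι] [AddCommGroup M]
    [PartialOrder M] [IsOrderedAddMonoid M] {f : ι → M} {i : ι} {p : M}
    (h : ∑ j, f j - p ≤ f i) : ∑ j with j ≠ i, f j ≤ p := by
  rw [Finset.filter_ne', Finset.sum_erase_eq_sub (Finset.mem_univ i)]
  exact sub_le_comm.mp h

section Sign

/-- The sign `x ↦ (-1)^x` as an additive character of `F_2`, which makes the orthogonality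
relations for characters applicable to `sgn2`. -/
def sgn2Char : AddChar (ZMod 2) ℂ where
  toFun := sgn2
  map_zero_eq_one' := if_pos rfl
  map_add_eq_mul' x y := by
    have h_add : ∀ x y : ZMod 2, x + y = 0 ↔ (x = 0 ↔ y = 0) := by decide
    by_cases hx : x = 0 <;> by_cases hy : y = 0 <;> simp [sgn2, h_add, hx, hy]

theorem sgn2Char_isPrimitive : sgn2Char.IsPrimitive :=
  have h_one : sgn2 1 ≠ 1 := by norm_num [sgn2]
  .of_ne_one (AddChar.ne_one_iff.mpr ⟨1, h_one⟩)

theorem sgn2_add (x y : ZMod 2) : sgn2 (x + y) = sgn2 x * sgn2 y :=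
  sgn2Char.map_add_eq_mul x y

theorem sgn2_mul_self (x : ZMod 2) : sgn2 x * sgn2 x = 1 := by
  rw [← sgn2_add, CharTwo.add_self_eq_zero, sgn2, if_pos rfl]

theorem star_sgn2 (x : ZMod 2) : star (sgn2 x) = sgn2 x := by
  unfold sgn2; split_ifs <;> simp

theorem sum_sgn2_dotProduct {ι : Type*} [Fintype ι] [DecidableEq ι] (z : ι → ZMod 2) :
    ∑ b : ι → ZMod 2, sgn2 (b ⬝ᵥ z) = if z = 0 then 2 ^ Fintype.card ι else 0 := by
  simpa using! sum_addChar_dotProduct sgn2Char_isPrimitive z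

theorem sum_sgn2_dotProduct_mul {ι : Type*} [Fintype ι] [DecidableEq ι] (b c : ι → ZMod 2) :
    ∑ d : ι → ZMod 2, sgn2 (b ⬝ᵥ d) * sgn2 (c ⬝ᵥ d) =
      if b = c then 2 ^ Fintype.card ι else 0 := by
  have h_eq : b + c = 0 ↔ b = c := by
    rw [← ZModModule.sub_eq_add, sub_eq_zero]
  simp only [← sgn2_add, ← add_dotProduct, dotProduct_comm (b + c), sum_sgn2_dotProduct, h_eq]

end Sign

section MagicBasis

theorem eight_mul_cczVec_mul_cczVec (x y : Fin 3 → ZMod 2) :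
    8 * (cczVec x * cczVec y) = sgn2 (x 0 * x 1 * x 2) * sgn2 (y 0 * y 1 * y 2) := by
  have h_norm : 8 * (((√8 : ℝ) : ℂ)⁻¹ * ((√8 : ℝ) : ℂ)⁻¹) = 1 := by
    rw [← mul_inv, ← Complex.ofReal_mul, Real.mul_self_sqrt (by norm_num)]
    norm_num
  rw [cczVec, cczVec, mul_mul_mul_comm, ← mul_assoc, h_norm, one_mul]

theorem star_cczVec (x : Fin 3 → ZMod 2) : star (cczVec x) = cczVec x := by
  rw [cczVec, star_mul', star_inv₀, star_sgn2, Complex.star_def, Complex.conj_ofReal]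

theorem Mvec_apply (b x : Fin 3 → ZMod 2) : Mvec b x = sgn2 (b ⬝ᵥ x) * cczVec x :=
  mulVec_diagonal _ _ _

theorem Mvec_zero : Mvec 0 = cczVec := by
  ext x
  simp [Mvec_apply, sgn2]

theorem star_Mvec (b : Fin 3 → ZMod 2) : star (Mvec b) = Mvec b := by
  ext x
  rw [Pi.star_apply, Mvec_apply, star_mul', star_sgn2, star_cczVec]

theorem outerM_eq_vecMulVec (b : Fin 3 → ZMod 2) :
    outerM b = vecMulVec (Mvec b) (star (Mvec b)) := rfl

theorem Sm_apply (d x y : Fin 3 → ZMod 2) :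
    Sm d x y = if x = y + d then 8 * (cczVec x * cczVec y) else 0 := by
  simp only [Sm, CCZm, Xm3, mul_diagonal, diagonal_mul, of_apply, eight_mul_cczVec_mul_cczVec]
  split_ifs <;> ring

theorem Sm_zero : Sm 0 = 1 := by
  ext x y
  rw [Sm_apply, add_zero, Matrix.one_apply]
  split_ifs with h
  · rw [h, eight_mul_cczVec_mul_cczVec, sgn2_mul_self]
  · rfl

theorem Sm_eq_sum_smul_outerM (d : Fin 3 → ZMod 2) :
    Sm d = ∑ b, sgn2 (b ⬝ᵥ d) • outerM b := by
  ext x y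
  have h_entry (b : Fin 3 → ZMod 2) : (sgn2 (b ⬝ᵥ d) • outerM b) x y =
      cczVec x * cczVec y * sgn2 (b ⬝ᵥ (x + (y + d))) := by
    rw [outerM_eq_vecMulVec, star_Mvec, Matrix.smul_apply, vecMulVec_apply, Mvec_apply, Mvec_apply,
      dotProduct_add, dotProduct_add, sgn2_add, sgn2_add, smul_eq_mul]
    ring
  rw [Matrix.sum_apply, Finset.sum_congr rfl fun b _ => h_entry b, ← Finset.mul_sum,
    sum_sgn2_dotProduct, Sm_apply]
  simp only [CharTwo.add_eq_zero, mul_ite, mul_zero]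
  norm_num [mul_comm]

theorem sum_outerM : ∑ b, outerM b = 1 := by
  simpa [sgn2, Sm_zero] using (Sm_eq_sum_smul_outerM 0).symm

theorem outerM_mul_mul_outerM (b : Fin 3 → ZMod 2)
    (ρ : Matrix (Fin 3 → ZMod 2) (Fin 3 → ZMod 2) ℂ) :
    outerM b * ρ * outerM b = innerC (Mvec b) (ρ *ᵥ Mvec b) • outerM b :=
  vecMulVec_mul_mul_vecMulVec _ _ _ _ _

theorem sum_Sm_mul_mul_Sm (ρ : Matrix (Fin 3 → ZMod 2) (Fin 3 → ZMod 2) ℂ) :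
    ∑ d, Sm d * ρ * Sm d = (8 : ℂ) • ∑ b, innerC (Mvec b) (ρ *ᵥ Mvec b) • outerM b := by
  rw [sum_mul_mul_eq_smul_sum_of_orthogonal Sm_eq_sum_smul_outerM sum_sgn2_dotProduct_mul]
  simp only [outerM_mul_mul_outerM]
  norm_num

theorem sum_innerC_Mvec (ρ : Matrix (Fin 3 → ZMod 2) (Fin 3 → ZMod 2) ℂ) :
    ∑ b, innerC (Mvec b) (ρ *ᵥ Mvec b) = ρ.trace :=
  sum_dotProduct_mulVec_eq_trace sum_outerM ρ

end MagicBasis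

open scoped ComplexOrder in
/-- Twirling identity for the `CCZ` magic state: for every three-qubit operator `ρ`,
`(1/8) Σ_d S^{(d)} ρ S^{(d)} = Σ_b ⟨M_b, ρ M_b⟩ |M_b⟩⟨M_b|`. Consequently, if `ρ` is a
state (positive semidefinite, trace one) with `⟨CCZ, ρ CCZ⟩ ≥ 1 − p`, then the
coefficients `p_b = ⟨M_b, ρ M_b⟩` are nonnegative reals summing to `1` with
`Σ_{b ≠ 0} p_b ≤ p`. -/
theorem ccz_twirling
    (ρ : Matrix (Fin 3 → ZMod 2) (Fin 3 → ZMod 2) ℂ) :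
    ((1 : ℂ) / 8) • (∑ d, Sm d * ρ * Sm d) =
      ∑ b, innerC (Mvec b) (ρ.mulVec (Mvec b)) • outerM b ∧
    ∀ p : ℝ, ρ.PosSemidef → ρ.trace = 1 →
      ((1 - p : ℝ) : ℂ) ≤ innerC cczVec (ρ.mulVec cczVec) →
      (∀ b, 0 ≤ innerC (Mvec b) (ρ.mulVec (Mvec b))) ∧
      (∑ b, innerC (Mvec b) (ρ.mulVec (Mvec b))) = 1 ∧
      (∑ b ∈ Finset.univ.filter fun b => b ≠ 0, innerC (Mvec b) (ρ.mulVec (Mvec b))) ≤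
        ((p : ℝ) : ℂ) := by
  refine ⟨?_, fun p hρ htr hp => ?_⟩
  · rw [sum_Sm_mul_mul_Sm, smul_smul]
    norm_num
  · have hsum : ∑ b, innerC (Mvec b) (ρ *ᵥ Mvec b) = 1 := (sum_innerC_Mvec ρ).trans htr
    refine ⟨fun b => hρ.dotProduct_mulVec_nonneg (Mvec b), hsum, sum_ne_le_of_sum_sub_le ?_⟩
    rw [hsum, Mvec_zero]
    exact_mod_cast hp
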